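/- Let α > -1/2 and set β = α, γ = α + 1/2, λ_n = n(n+2α+1), ν(n,k,α) = 2n + k + α + 1/2, K_α = Γ(α+1)/(2^{α+1/2} Γ(α+3/2)). Then for every t > 0 and x, y ∈ (-1,1): ∑_{m≥0} R_m^{-1} e^{-λ_m t} P_m^{α,α}(x) P_m^{α,α}(y) = √π K_α (e^{γ²t}/√t) ∑_{n,k ≥ 0} [Γ(ν(n,k,α)+1) (xy)^k / (k! n! Γ(α+n+1))] · [(1-x²)(1-y²)/4]ⁿ · (f_{T₁} ⋆ f_{C_{ν(n,k,α)}})(1/(2t)), where (f ⋆ g)(r) = ∫₀^r f(s) g(r-s) ds. -/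

import Mathlib

open scoped BigOperators

/-- Pochhammer symbol `(a)_k = a(a+1)⋯(a+k-1)` for real `a`. -/
noncomputable def poch (a : ℝ) (k : ℕ) : ℝ := (ascPochhammer ℝ k).eval a

/-- The Jacobi polynomial `P_n^{α,β}` as a function on `ℝ`. -/
noncomputable def jacobiP (α β : ℝ) (n : ℕ) : ℝ → ℝ := fun x =>
  (poch (α + 1) n / (Nat.factorial n : ℝ)) *
    ∑ k ∈ Finset.range (n + 1),
      (poch (-(n : ℝ)) k * poch ((n : ℝ) + α + β + 1) k) /
        (poch (α + 1) k * (Nat.factorial k : ℝ)) * ((1 - x) / 2) ^ k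

/-- The normalization constant
`R_n = [Γ(α+β+2)/(2n+α+β+1)] ⬝ [(α+1)_n (β+1)_n / (Γ(α+β+n+1) n!)]`. -/
noncomputable def Rn (α β : ℝ) (n : ℕ) : ℝ :=
  Real.Gamma (α + β + 2) / (2 * (n : ℝ) + α + β + 1) *
    (poch (α + 1) n * poch (β + 1) n / (Real.Gamma (α + β + (n : ℝ) + 1) * (Nat.factorial n : ℝ)))

/-- The density of the Lévy variable `C_h` (`h > 0`). -/
noncomputable def fC (h : ℝ) (s : ℝ) : ℝ :=
  (2 : ℝ) ^ h / Real.Gamma h *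
    ∑' p : ℕ, (-1 : ℝ) ^ p * (Real.Gamma ((p : ℝ) + h) / (Nat.factorial p : ℝ)) *
      ((2 * (p : ℝ) + h) / Real.sqrt (2 * Real.pi * s ^ 3)) *
      Real.exp (-(2 * (p : ℝ) + h) ^ 2 / (2 * s))

/-- The density of the Lévy variable `T₁`. -/
noncomputable def fT1 (s : ℝ) : ℝ :=
  ∑' k : ℕ, Real.exp (-Real.pi ^ 2 * ((k : ℝ) + 1 / 2) ^ 2 * s / 2)

/-- Convolution of functions on `(0,∞)`: `(f ⋆ g)(r) = ∫₀^r f(s) g(r-s) ds`. -/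
noncomputable def conv (f g : ℝ → ℝ) (r : ℝ) : ℝ := ∫ s in (0 : ℝ)..r, f s * g (r - s)

/-!
Both sides are rearrangements of one triple series, which converges absolutely because heat kernels
decay like Gaussians while all other factors grow at most factorially.

The functions `f_{T₁}` and `f_{C_h}` have the Laplace transforms `tanh z / z` and `sech z ^ h` at
`z ^ 2 / 2`. Since `h * tanh z * sech z ^ h` is minus the derivative of `sech z ^ h`, expanding it
in powers of `exp (-2 z)` exhibits `f_{T₁} ⋆ f_{C_h}` as an alternating series, indexed by `q`, of
heat kernels. At `r = 1 / (2 t)` the `q`-th heat kernel of the `(n, k)`-th term depends only on the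
degree `m = 2 n + k + 2 q`, and `e ^ {γ² t}` turns it into `e ^ {-λ_m t}`.

It remains to identify the polynomial in `(x, y)` collecting the terms of degree `m` with a multiple
of `P_m(x) P_m(y)`. It is symmetric and satisfies the Jacobi differential equation in `x`, whose
polynomial solutions form a line spanned by `P_m`; comparing leading coefficients gives the factor.
-/

section GrowthEstimates

open Filter Topology

lemma poch_zero (c : ℝ) : poch c 0 = 1 := by
  rw [poch, ascPochhammer_zero, Polynomial.eval_one]

lemma poch_succ (c : ℝ) (n : ℕ) : poch c (n + 1) = poch c n * (c + n) :=
  ascPochhammer_succ_eval n c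

lemma poch_pos {c : ℝ} (hc : 0 < c) (n : ℕ) : 0 < poch c n :=
  ascPochhammer_pos n c hc

lemma Gamma_add_natCast {c : ℝ} (hc : 0 < c) (n : ℕ) :
    Real.Gamma (c + n) = poch c n * Real.Gamma c := by
  induction n with
  | zero => rw [Nat.cast_zero, add_zero, poch_zero, one_mul]
  | succ n ih =>
    rw [poch_succ, Nat.cast_succ, ← add_assoc, Real.Gamma_add_one (by positivity), ih]
    ring

lemma pow_le_poch {c : ℝ} (hc : 0 < c) (n : ℕ) : c ^ n ≤ poch c n := by
  induction n with
  | zero => rw [pow_zero, poch_zero]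
  | succ n ih =>
    have := poch_pos hc n
    rw [pow_succ, poch_succ]
    gcongr
    exact le_add_of_nonneg_right n.cast_nonneg

lemma poch_le_pow_mul_factorial {c : ℝ} (hc : 0 < c) (n : ℕ) :
    poch c n ≤ (1 + c) ^ n * n.factorial := by
  induction n with
  | zero => rw [poch_zero, pow_zero, Nat.factorial_zero, Nat.cast_one, one_mul]
  | succ n ih =>
    have factor_le : c + n ≤ (1 + c) * (n + 1) := by nlinarith [n.cast_nonneg (α := ℝ)]
    calc poch c (n + 1) = poch c n * (c + n) := poch_succ c n
      _ ≤ ((1 + c) ^ n * n.factorial) * ((1 + c) * (n + 1)) := by gcongr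
      _ = (1 + c) ^ (n + 1) * (n + 1).factorial := by
        rw [Nat.factorial_succ, Nat.cast_mul, Nat.cast_succ, pow_succ]; ring

lemma Gamma_add_natCast_le {c : ℝ} (hc : 0 < c) (n : ℕ) :
    Real.Gamma (c + n) ≤ Real.Gamma c * ((1 + c) ^ n * n.factorial) := by
  rw [Gamma_add_natCast hc, mul_comm]
  exact mul_le_mul_of_nonneg_left (poch_le_pow_mul_factorial hc n) (Real.Gamma_pos_of_pos hc).le

lemma tendsto_natCast_add_one_mul_exp_neg {t : ℝ} (ht : 0 < t) :
    Tendsto (fun n : ℕ => ((n : ℝ) + 1) * Real.exp (-t * (2 * n + 1))) atTop (𝓝 0) := by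
  have odd_atTop : Tendsto (fun n : ℕ => t * (2 * (n : ℝ) + 1)) atTop atTop :=
    (tendsto_atTop_add_const_right _ _
      (tendsto_natCast_atTop_atTop.const_mul_atTop two_pos)).const_mul_atTop ht
  have linear := (Real.tendsto_pow_mul_exp_neg_atTop_nhds_zero 1).comp odd_atTop
  have const := (Real.tendsto_pow_mul_exp_neg_atTop_nhds_zero 0).comp odd_atTop
  have combined := (linear.const_mul (1 / (2 * t))).add (const.const_mul (1 / 2))
  rw [mul_zero, mul_zero, add_zero] at combined
  refine combined.congr fun n => ?_
  simp only [Function.comp_apply, pow_one, pow_zero, one_mul, neg_mul]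
  field_simp
  ring

lemma summable_factorial_mul_pow_mul_exp_neg_sq {D t : ℝ} (hD : 0 < D) (ht : 0 < t) :
    Summable fun n : ℕ => n.factorial * D ^ n * Real.exp (-t * (n : ℝ) ^ 2) := by
  refine summable_of_ratio_test_tendsto_lt_one zero_lt_one
    (Eventually.of_forall fun n => by positivity) ?_
  have limit := (tendsto_natCast_add_one_mul_exp_neg ht).const_mul D
  rw [mul_zero] at limit
  refine limit.congr fun n => ?_
  have exponent : -t * ((n + 1 : ℕ) : ℝ) ^ 2 = -t * (2 * n + 1) + -t * (n : ℝ) ^ 2 := by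
    push_cast; ring
  rw [Real.norm_of_nonneg (by positivity), Real.norm_of_nonneg (by positivity),
    eq_div_iff (by positivity), Nat.factorial_succ, exponent, Real.exp_add]
  push_cast
  ring

lemma exists_factorial_mul_pow_mul_exp_neg_sq_le {D t : ℝ} (hD : 0 < D) (ht : 0 < t) :
    ∃ C, ∀ n : ℕ, n.factorial * D ^ n * Real.exp (-t * (n : ℝ) ^ 2) ≤ C * (1 / 2) ^ n := by
  have summable := summable_factorial_mul_pow_mul_exp_neg_sq (D := 2 * D) (by positivity) ht
  refine ⟨∑' n : ℕ, n.factorial * (2 * D) ^ n * Real.exp (-t * (n : ℝ) ^ 2), fun n => ?_⟩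
  have term_le := summable.le_tsum n fun j _ => by positivity
  calc n.factorial * D ^ n * Real.exp (-t * (n : ℝ) ^ 2)
      = n.factorial * (2 * D) ^ n * Real.exp (-t * (n : ℝ) ^ 2) * (1 / 2) ^ n := by
        rw [mul_pow, div_pow, one_pow]; field_simp
    _ ≤ _ := by gcongr

lemma natCast_add_le_mul_two_pow {c : ℝ} (hc : 0 ≤ c) (n : ℕ) : n + c ≤ (1 + c) * 2 ^ n := by
  have natCast_le : (n : ℝ) ≤ 2 ^ n := by exact_mod_cast Nat.lt_two_pow_self.le
  have one_le : (1 : ℝ) ≤ 2 ^ n := one_le_pow₀ one_le_two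
  nlinarith

end GrowthEstimates

section HeatKernel

open Real Set MeasureTheory

lemma strictMonoOn_mul_sub_div {A B : ℝ} (hA : 0 < A) (hB : 0 < B) :
    StrictMonoOn (fun u : ℝ => A * u - B / u) (Ioi 0) := by
  intro u hu v _ huv
  have hu' : 0 < u := hu
  have : B / v < B / u := div_lt_div_of_pos_left hB hu' huv
  have : A * u < A * v := by gcongr
  simp only
  linarith

lemma image_mul_sub_div_Ioi {A B : ℝ} (hA : 0 < A) (hB : 0 < B) :
    (fun u : ℝ => A * u - B / u) '' Ioi 0 = univ := by
  refine eq_univ_of_forall fun v => ?_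
  have sq_root : √(v ^ 2 + 4 * A * B) ^ 2 = v ^ 2 + 4 * A * B := sq_sqrt (by positivity)
  have neg_lt_root : -v < √(v ^ 2 + 4 * A * B) := by
    refine (neg_le_abs v).trans_lt (lt_sqrt_of_sq_lt ?_)
    rw [sq_abs]
    linarith [mul_pos hA hB]
  have root_pos : 0 < v + √(v ^ 2 + 4 * A * B) := by linarith
  refine ⟨(v + √(v ^ 2 + 4 * A * B)) / (2 * A), mem_Ioi.2 (by positivity), ?_⟩
  generalize √(v ^ 2 + 4 * A * B) = w at *
  simp only
  field_simp
  linear_combination sq_root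

lemma hasDerivAt_mul_sub_div (A B : ℝ) {u : ℝ} (hu : u ≠ 0) :
    HasDerivAt (fun u : ℝ => A * u - B / u) (A + B / u ^ 2) u := by
  have h := ((hasDerivAt_id u).const_mul A).sub ((hasDerivAt_inv hu).const_mul B)
  refine (h.congr_deriv ?_).congr_of_eventuallyEq (.of_forall fun v => ?_)
  · rw [mul_one]; ring
  · simp [div_eq_mul_inv]

/-- Substitute `v = A u - B / u` in the Gaussian integral. -/
lemma integral_Ioi_deriv_mul_exp_neg_sq {A B : ℝ} (hA : 0 < A) (hB : 0 < B) :
    IntegrableOn (fun u : ℝ => (A + B / u ^ 2) * exp (-(A * u - B / u) ^ 2)) (Ioi 0) ∧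
      ∫ u in Ioi (0 : ℝ), (A + B / u ^ 2) * exp (-(A * u - B / u) ^ 2) = √π := by
  have deriv : ∀ u ∈ Ioi (0 : ℝ),
      HasDerivWithinAt (fun u : ℝ => A * u - B / u) (A + B / u ^ 2) (Ioi 0) u :=
    fun u hu => (hasDerivAt_mul_sub_div A B (ne_of_gt hu)).hasDerivWithinAt
  have mono := (strictMonoOn_mul_sub_div hA hB).monotoneOn
  have integrable := (integrableOn_image_iff_integrableOn_deriv_smul_of_monotoneOn
    measurableSet_Ioi deriv mono fun v => exp (-v ^ 2)).1
  have value := integral_image_eq_integral_deriv_smul_of_monotoneOn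
    measurableSet_Ioi deriv mono fun v => exp (-v ^ 2)
  rw [image_mul_sub_div_Ioi hA hB] at integrable value
  refine ⟨integrable ?_, value.symm.trans ?_⟩
  · simpa using integrable_exp_neg_mul_sq one_pos
  · simpa using integral_gaussian 1

lemma image_div_Ioi {c : ℝ} (hc : 0 < c) : (fun u : ℝ => c / u) '' Ioi 0 = Ioi 0 := by
  refine Subset.antisymm (image_subset_iff.2 fun u hu => div_pos hc hu) fun v hv => ?_
  exact ⟨c / v, div_pos hc hv, by simp [hc.ne']⟩

lemma integral_Ioi_exp_neg_sq_mul_sub_div_eq {A B : ℝ} (hA : 0 < A) (hB : 0 < B) :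
    ∫ u in Ioi (0 : ℝ), A * exp (-(A * u - B / u) ^ 2) =
      ∫ u in Ioi (0 : ℝ), B / u ^ 2 * exp (-(A * u - B / u) ^ 2) := by
  have hc : 0 < B / A := div_pos hB hA
  have deriv : ∀ u ∈ Ioi (0 : ℝ),
      HasDerivWithinAt (fun u : ℝ => B / A / u) (-(B / A / u ^ 2)) (Ioi 0) u := by
    intro u hu
    have h := (hasDerivAt_inv (ne_of_gt hu)).const_mul (B / A)
    exact (h.congr_deriv (by ring)).hasDerivWithinAt
  have anti : AntitoneOn (fun u : ℝ => B / A / u) (Ioi 0) := fun u hu v _ huv =>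
    div_le_div_of_nonneg_left hc.le hu huv
  have key := integral_image_eq_integral_deriv_smul_of_antitoneOn measurableSet_Ioi deriv anti
    fun u => A * exp (-(A * u - B / u) ^ 2)
  rw [image_div_Ioi hc] at key
  rw [key]
  refine setIntegral_congr_fun measurableSet_Ioi fun u hu => ?_
  have hu' : u ≠ 0 := ne_of_gt hu
  have swap : A * (B / A / u) - B / (B / A / u) = -(A * u - B / u) := by field_simp; ring
  simp only [swap, neg_sq, neg_neg, smul_eq_mul]
  field_simp

lemma integral_Ioi_exp_neg_sq_mul_sub_div {A B : ℝ} (hA : 0 < A) (hB : 0 < B) :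
    IntegrableOn (fun u : ℝ => exp (-(A * u - B / u) ^ 2)) (Ioi 0) ∧
      ∫ u in Ioi (0 : ℝ), exp (-(A * u - B / u) ^ 2) = √π / (2 * A) := by
  obtain ⟨integrable_sum, integral_sum⟩ := integral_Ioi_deriv_mul_exp_neg_sq hA hB
  have integrable_left : IntegrableOn (fun u : ℝ => A * exp (-(A * u - B / u) ^ 2)) (Ioi 0) := by
    refine integrable_sum.mono' (by fun_prop) (.of_forall fun u => ?_)
    rw [norm_of_nonneg (by positivity)]
    gcongr
    exact le_add_of_nonneg_right (by positivity)
  have integrable_right :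
      IntegrableOn (fun u : ℝ => B / u ^ 2 * exp (-(A * u - B / u) ^ 2)) (Ioi 0) := by
    refine (integrable_sum.sub integrable_left).congr (.of_forall fun u => ?_)
    simp only [Pi.sub_apply]
    ring
  have double : A * (∫ u in Ioi (0 : ℝ), exp (-(A * u - B / u) ^ 2)) * 2 = √π := by
    rw [← integral_sum]
    simp only [add_mul]
    rw [integral_add integrable_left integrable_right,
      ← integral_Ioi_exp_neg_sq_mul_sub_div_eq hA hB, integral_const_mul, mul_two]
  refine ⟨(integrable_left.const_mul A⁻¹).congr (.of_forall fun u => ?_), ?_⟩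
  · exact inv_mul_cancel_left₀ hA.ne' _
  · rw [← double]
    field_simp

lemma integral_Ioi_exp_neg_sq_add_sq {A B : ℝ} (hA : 0 < A) (hB : 0 ≤ B) :
    IntegrableOn (fun u : ℝ => exp (-((A * u) ^ 2 + (B / u) ^ 2))) (Ioi 0) ∧
      ∫ u in Ioi (0 : ℝ), exp (-((A * u) ^ 2 + (B / u) ^ 2)) =
        √π / (2 * A) * exp (-(2 * A * B)) := by
  rcases hB.eq_or_lt with rfl | hB
  · have integrand (u : ℝ) :
        exp (-((A * u) ^ 2 + (0 / u) ^ 2)) = exp (-A ^ 2 * u ^ 2) := by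
      congr 1; ring
    simp only [integrand]
    refine ⟨(integrable_exp_neg_mul_sq (by positivity)).integrableOn, ?_⟩
    rw [integral_gaussian_Ioi, sqrt_div' _ (sq_nonneg A), sqrt_sq hA.le, mul_zero, neg_zero,
      exp_zero]
    ring
  · obtain ⟨integrable, value⟩ := integral_Ioi_exp_neg_sq_mul_sub_div hA hB
    have complete_square : ∀ u ∈ Ioi (0 : ℝ), exp (-((A * u) ^ 2 + (B / u) ^ 2)) =
        exp (-(A * u - B / u) ^ 2) * exp (-(2 * A * B)) := by
      intro u hu
      have hu' : u ≠ 0 := ne_of_gt hu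
      rw [← exp_add]
      congr 1
      field_simp
      ring
    rw [integrableOn_congr_fun complete_square measurableSet_Ioi,
      setIntegral_congr_fun measurableSet_Ioi complete_square, integral_mul_const, value]
    exact ⟨integrable.mul_const _, rfl⟩

/-- The centred Gaussian density of variance `s`, i.e. the heat kernel `exp (-b²/2s) / √(2πs)`. -/
noncomputable def heatKernel (b s : ℝ) : ℝ := exp (-b ^ 2 / (2 * s)) / √(2 * π * s)

/-- The density at time `s` of the first hitting time of the level `a > 0` by Brownian motion; these
are the building blocks of the series defining `fC`. -/
noncomputable def hittingDensity (a s : ℝ) : ℝ := a / √(2 * π * s ^ 3) * exp (-a ^ 2 / (2 * s))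

lemma heatKernel_nonneg (b s : ℝ) : 0 ≤ heatKernel b s := by
  unfold heatKernel; positivity

lemma hittingDensity_nonneg {a : ℝ} (ha : 0 ≤ a) (s : ℝ) : 0 ≤ hittingDensity a s := by
  unfold hittingDensity; positivity

lemma hasDerivAt_mul_sq_div_one_add_sq (r u : ℝ) :
    HasDerivAt (fun u : ℝ => r * u ^ 2 / (1 + u ^ 2)) (2 * r * u / (1 + u ^ 2) ^ 2) u := by
  have h := ((hasDerivAt_pow 2 u).const_mul r).div ((hasDerivAt_pow 2 u).const_add 1)
    (by positivity)
  refine h.congr_deriv ?_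
  field_simp
  ring

lemma monotoneOn_mul_sq_div_one_add_sq {r : ℝ} (hr : 0 < r) :
    MonotoneOn (fun u : ℝ => r * u ^ 2 / (1 + u ^ 2)) (Ioi 0) := by
  intro u hu v _ huv
  have hsq : u ^ 2 ≤ v ^ 2 := pow_le_pow_left₀ (le_of_lt hu) huv 2
  simp only
  rw [div_le_div_iff₀ (by positivity) (by positivity)]
  nlinarith [mul_le_mul_of_nonneg_left hsq hr.le]

lemma image_mul_sq_div_one_add_sq {r : ℝ} (hr : 0 < r) :
    (fun u : ℝ => r * u ^ 2 / (1 + u ^ 2)) '' Ioi 0 = Ioo 0 r := by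
  refine Subset.antisymm (image_subset_iff.2 fun u hu => ?_) fun s hs => ?_
  · have hu' : 0 < u := hu
    refine ⟨by positivity, ?_⟩
    rw [div_lt_iff₀ (by positivity)]
    linarith
  · have hrs : 0 < r - s := sub_pos.2 hs.2
    refine ⟨√(s / (r - s)), sqrt_pos.2 (div_pos hs.1 hrs), ?_⟩
    have one_add : 1 + s / (r - s) = r / (r - s) := by field_simp; ring
    simp only
    rw [sq_sqrt (div_pos hs.1 hrs).le, one_add]
    field_simp

lemma sqrt_pow_three {s : ℝ} (hs : 0 ≤ s) : √(s ^ 3) = √s ^ 3 := by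
  rw [sqrt_eq_iff_mul_self_eq (by positivity) (by positivity)]
  linear_combination -(s ^ 2 + s * √s ^ 2 + √s ^ 4) * sq_sqrt hs

lemma heatKernel_mul_hittingDensity_comp {r u : ℝ} (a b : ℝ) (hr : 0 < r) (hu : 0 < u) :
    2 * r * u / (1 + u ^ 2) ^ 2 * (heatKernel b (r * u ^ 2 / (1 + u ^ 2)) *
        hittingDensity a (r - r * u ^ 2 / (1 + u ^ 2))) =
      a / (π * r) * exp (-(a ^ 2 + b ^ 2) / (2 * r)) *
        exp (-((a / √(2 * r) * u) ^ 2 + (b / √(2 * r) / u) ^ 2)) := by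
  have compl : r - r * u ^ 2 / (1 + u ^ 2) = r / (1 + u ^ 2) := by field_simp; ring
  have sq_two_pi : √(2 * π) ^ 2 = 2 * π := sq_sqrt (by positivity)
  have sq_r : √r ^ 2 = r := sq_sqrt hr.le
  have sq_one_add : √(1 + u ^ 2) ^ 2 = 1 + u ^ 2 := sq_sqrt (by positivity)
  have exponents : exp (-b ^ 2 / (2 * (r * u ^ 2 / (1 + u ^ 2)))) *
        exp (-a ^ 2 / (2 * (r / (1 + u ^ 2)))) = exp (-(a ^ 2 + b ^ 2) / (2 * r)) *
        exp (-((a / √(2 * r) * u) ^ 2 + (b / √(2 * r) / u) ^ 2)) := by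
    rw [← exp_add, ← exp_add, mul_pow, div_pow, div_pow, div_pow, sq_sqrt (by positivity)]
    congr 1
    field_simp
    ring
  have prefactors : 2 * r * u / (1 + u ^ 2) ^ 2 * (1 / √(2 * π * (r * u ^ 2 / (1 + u ^ 2)))) *
      (a / √(2 * π * (r / (1 + u ^ 2)) ^ 3)) = a / (π * r) := by
    rw [sqrt_mul (by positivity) (r * u ^ 2 / _), sqrt_mul (by positivity) ((r / _) ^ 3),
      sqrt_pow_three (by positivity), sqrt_div (by positivity), sqrt_div hr.le, sqrt_mul hr.le,
      sqrt_sq hu.le, ← sq_one_add, sqrt_sq (sqrt_nonneg _)]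
    field_simp
    rw [show √r ^ 4 = (√r ^ 2) ^ 2 by ring, sq_r, sq_two_pi]
    field_simp
  calc _ = 2 * r * u / (1 + u ^ 2) ^ 2 * (1 / √(2 * π * (r * u ^ 2 / (1 + u ^ 2)))) *
        (a / √(2 * π * (r / (1 + u ^ 2)) ^ 3)) *
        (exp (-b ^ 2 / (2 * (r * u ^ 2 / (1 + u ^ 2)))) *
          exp (-a ^ 2 / (2 * (r / (1 + u ^ 2))))) := by
        rw [compl, heatKernel, hittingDensity]; ring
    _ = _ := by rw [prefactors, exponents, mul_assoc]

lemma mul_exp_mul_exp_eq_heatKernel {a r : ℝ} (b : ℝ) (ha : 0 < a) (hr : 0 < r) :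
    a / (π * r) * exp (-(a ^ 2 + b ^ 2) / (2 * r)) * (√π / (2 * (a / √(2 * r))) *
      exp (-(2 * (a / √(2 * r)) * (b / √(2 * r))))) = heatKernel (a + b) r := by
  have sq_two_r : √(2 * r) ^ 2 = 2 * r := sq_sqrt (by positivity)
  have sq_pi : √π ^ 2 = π := sq_sqrt pi_pos.le
  have exponents : exp (-(a ^ 2 + b ^ 2) / (2 * r)) *
      exp (-(2 * (a / √(2 * r)) * (b / √(2 * r)))) = exp (-(a + b) ^ 2 / (2 * r)) := by
    rw [← exp_add, show 2 * (a / √(2 * r)) * (b / √(2 * r)) = 2 * a * b / √(2 * r) ^ 2 by ring,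
      sq_two_r]
    congr 1
    field_simp
    ring
  have prefactors : a / (π * r) * (√π / (2 * (a / √(2 * r)))) = 1 / √(2 * π * r) := by
    rw [show 2 * π * r = π * (2 * r) by ring, sqrt_mul pi_pos.le]
    rw [div_mul_div_comm, div_eq_div_iff (by positivity) (by positivity)]
    field_simp
    rw [sq_pi, sq_two_r]
    ring
  rw [heatKernel, ← exponents, div_eq_mul_one_div _ √(2 * π * r), ← prefactors]
  ring

/-- With `s = r u² / (1 + u²)` the convolution integral becomes
`integral_Ioi_exp_neg_sq_add_sq`. -/
lemma integrableOn_and_integral_heatKernel_mul_hittingDensity {a b r : ℝ} (ha : 0 < a)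
    (hb : 0 ≤ b) (hr : 0 < r) :
    IntegrableOn (fun s => heatKernel b s * hittingDensity a (r - s)) (Ioo 0 r) ∧
      ∫ s in Ioo 0 r, heatKernel b s * hittingDensity a (r - s) = heatKernel (a + b) r := by
  have deriv : ∀ u ∈ Ioi (0 : ℝ), HasDerivWithinAt (fun u : ℝ => r * u ^ 2 / (1 + u ^ 2))
      (2 * r * u / (1 + u ^ 2) ^ 2) (Ioi 0) u :=
    fun u _ => (hasDerivAt_mul_sq_div_one_add_sq r u).hasDerivWithinAt
  have mono := monotoneOn_mul_sq_div_one_add_sq hr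
  have substituted : ∀ u ∈ Ioi (0 : ℝ), _ := fun u hu =>
    heatKernel_mul_hittingDensity_comp a b hr hu
  obtain ⟨integrable, value⟩ := integral_Ioi_exp_neg_sq_add_sq (A := a / √(2 * r))
    (B := b / √(2 * r)) (by positivity) (by positivity)
  rw [← image_mul_sq_div_one_add_sq hr,
    integrableOn_image_iff_integrableOn_deriv_smul_of_monotoneOn measurableSet_Ioi deriv mono,
    integral_image_eq_integral_deriv_smul_of_monotoneOn measurableSet_Ioi deriv mono]
  simp only [smul_eq_mul]
  rw [integrableOn_congr_fun substituted measurableSet_Ioi,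
    setIntegral_congr_fun measurableSet_Ioi substituted, integral_const_mul, value]
  exact ⟨integrable.const_mul _, mul_exp_mul_exp_eq_heatKernel b ha hr⟩

end HeatKernel

section LevyDensities

open Real Set MeasureTheory

lemma exists_factorial_mul_pow_mul_heatKernel_le {D r : ℝ} (hD : 0 < D) (hr : 0 < r) :
    ∃ C, ∀ (n : ℕ) (b : ℝ), n ≤ b → n.factorial * D ^ n * heatKernel b r ≤ C * (1 / 2) ^ n := by
  obtain ⟨C, hC⟩ := exists_factorial_mul_pow_mul_exp_neg_sq_le hD (t := 1 / (2 * r)) (by positivity)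
  refine ⟨C / √(2 * π * r), fun n b hb => ?_⟩
  have exp_le : exp (-b ^ 2 / (2 * r)) ≤ exp (-(1 / (2 * r)) * (n : ℝ) ^ 2) := by
    rw [neg_mul, one_div_mul_eq_div, neg_div]
    gcongr
  calc n.factorial * D ^ n * heatKernel b r
      ≤ n.factorial * D ^ n * (exp (-(1 / (2 * r)) * (n : ℝ) ^ 2) / √(2 * π * r)) := by
        unfold heatKernel; gcongr
    _ = n.factorial * D ^ n * exp (-(1 / (2 * r)) * (n : ℝ) ^ 2) / √(2 * π * r) :=
        (mul_div_assoc _ _ _).symm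
    _ ≤ C * (1 / 2) ^ n / √(2 * π * r) := div_le_div_of_nonneg_right (hC n) (sqrt_nonneg _)
    _ = C / √(2 * π * r) * (1 / 2) ^ n := by ring

lemma hittingDensity_eq_mul_heatKernel (a : ℝ) {s : ℝ} (hs : 0 < s) :
    hittingDensity a s = a / s * heatKernel a s := by
  rw [hittingDensity, heatKernel, show 2 * π * s ^ 3 = 2 * π * s * s ^ 2 by ring,
    sqrt_mul (by positivity), sqrt_sq hs.le]
  field_simp

/-- The coefficients of `tanh z = ∑ tanhCoeff j * exp (-2 j z)`. At `z = √(2 l)` the Laplace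
transforms of `fT1` and `heatKernel b` are `tanh z / z` and `exp (-b z) / z`, so these are also the
coefficients of `fT1` in heat kernels. -/
noncomputable def tanhCoeff (j : ℕ) : ℝ := if j = 0 then 1 else 2 * (-1) ^ j

lemma abs_tanhCoeff_le (j : ℕ) : |tanhCoeff j| ≤ 2 := by
  unfold tanhCoeff; split_ifs <;> simp [abs_mul]

lemma evenKernel_one_half_eq_two_mul_fT1 {s : ℝ} (hs : 0 < s) :
    HurwitzZeta.evenKernel ((1 / 2 : ℝ) : UnitAddCircle) (π * s / 2) = 2 * fT1 s := by
  have folded := (HurwitzZeta.hasSum_int_evenKernel (1 / 2) (t := π * s / 2)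
    (by positivity)).nat_add_neg_add_one
  rw [fT1, ← tsum_mul_left, ← folded.tsum_eq]
  refine tsum_congr fun n => ?_
  have exponent : -π * ((n : ℤ) + 1 / 2 : ℝ) ^ 2 * (π * s / 2) =
      -π ^ 2 * ((n : ℝ) + 1 / 2) ^ 2 * s / 2 := by push_cast; ring
  have exponent_neg : -π * (((-((n : ℤ) + 1) : ℤ) : ℝ) + 1 / 2) ^ 2 * (π * s / 2) =
      -π ^ 2 * ((n : ℝ) + 1 / 2) ^ 2 * s / 2 := by push_cast; ring
  rw [exponent, exponent_neg, two_mul]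

lemma hasSum_tanhCoeff_mul_exp {s : ℝ} (hs : 0 < s) :
    HasSum (fun j : ℕ => tanhCoeff j * exp (-(2 * j : ℝ) ^ 2 / (2 * s)))
      (HurwitzZeta.cosKernel ((1 / 2 : ℝ) : UnitAddCircle) (1 / (π * s / 2))) := by
  have tail := HurwitzZeta.hasSum_nat_cosKernel₀ (1 / 2) (t := 1 / (π * s / 2)) (by positivity)
  have head : ∑ j ∈ Finset.range 1, tanhCoeff j * exp (-(2 * j : ℝ) ^ 2 / (2 * s)) = 1 := by
    simp [tanhCoeff]
  refine (hasSum_nat_add_iff' 1).1 ?_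
  rw [head]
  refine tail.congr_fun fun n => ?_
  have sign : cos (2 * π * (1 / 2) * (n + 1)) = (-1) ^ (n + 1) := by
    rw [← cos_nat_mul_pi]; congr 1; push_cast; ring
  rw [tanhCoeff, if_neg n.succ_ne_zero, sign]
  congr 2
  push_cast
  field_simp

/-- The theta transformation of Jacobi. -/
lemma hasSum_tanhCoeff_mul_heatKernel {s : ℝ} (hs : 0 < s) :
    HasSum (fun j : ℕ => tanhCoeff j * heatKernel (2 * j) s) (fT1 s) := by
  have value : fT1 s = HurwitzZeta.cosKernel ((1 / 2 : ℝ) : UnitAddCircle) (1 / (π * s / 2)) /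
      √(2 * π * s) := by
    have functional := HurwitzZeta.evenKernel_functional_equation ((1 / 2 : ℝ) : UnitAddCircle)
      (π * s / 2)
    have root : √(2 * π * s) = 2 * √(π * s / 2) := by
      rw [show 2 * π * s = 2 ^ 2 * (π * s / 2) by ring, sqrt_mul (by positivity),
        sqrt_sq zero_le_two]
    rw [evenKernel_one_half_eq_two_mul_fT1 hs, ← sqrt_eq_rpow] at functional
    rw [root, eq_div_iff (by positivity)]
    linear_combination √(π * s / 2) * functional +
      HurwitzZeta.cosKernel ((1 / 2 : ℝ) : UnitAddCircle) (1 / (π * s / 2)) *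
        mul_one_div_cancel (a := √(π * s / 2)) (by positivity)
  rw [value]
  simpa only [heatKernel, mul_div_assoc] using (hasSum_tanhCoeff_mul_exp hs).div_const √(2 * π * s)

/-- The coefficients of `(1 / cosh z) ^ h = ∑ sechPowCoeff h p * exp (-(2 p + h) z)`; at
`z = √(2 l)` this is the Laplace transform of `fC h`. -/
noncomputable def sechPowCoeff (h : ℝ) (p : ℕ) : ℝ :=
  2 ^ h * ((-1) ^ p * poch h p / p.factorial)

lemma abs_sechPowCoeff_le {h : ℝ} (hh : 0 < h) (p : ℕ) :
    |sechPowCoeff h p| ≤ 2 ^ h * (1 + h) ^ p := by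
  have hp := poch_pos hh p
  rw [sechPowCoeff, abs_mul, abs_div, abs_mul, abs_pow, abs_neg, abs_one, one_pow, one_mul,
    abs_of_pos hp, Nat.abs_cast, abs_of_pos (by positivity)]
  gcongr
  exact (div_le_iff₀ (by positivity)).2 (poch_le_pow_mul_factorial hh p)

lemma fC_eq_tsum {h : ℝ} (hh : 0 < h) (s : ℝ) :
    fC h s = ∑' p : ℕ, sechPowCoeff h p * hittingDensity (2 * p + h) s := by
  rw [fC, ← tsum_mul_left]
  refine tsum_congr fun p => ?_
  have := Gamma_pos_of_pos hh
  rw [add_comm (p : ℝ) h, Gamma_add_natCast hh, sechPowCoeff, hittingDensity]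
  field_simp

lemma summable_sechPowCoeff_mul_hittingDensity {h s : ℝ} (hh : 0 < h) (hs : 0 < s) :
    Summable fun p : ℕ => sechPowCoeff h p * hittingDensity (2 * p + h) s := by
  obtain ⟨C, hC⟩ := exists_factorial_mul_pow_mul_heatKernel_le (D := 2 * (1 + h)) (by positivity) hs
  refine .of_norm_bounded (summable_geometric_two.mul_left (2 ^ h * (2 + h) / s * C)) fun p => ?_
  have heat_nonneg := heatKernel_nonneg (2 * p + h) s
  have coeff_le := abs_sechPowCoeff_le hh p
  have level_le : 2 * p + h ≤ (2 + h) * 2 ^ p := by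
    linarith [natCast_add_le_mul_two_pow (c := h / 2) (by positivity) p]
  have one_le_factorial : (1 : ℝ) ≤ p.factorial := by exact_mod_cast p.factorial_pos
  rw [norm_mul, norm_eq_abs, hittingDensity_eq_mul_heatKernel _ hs,
    norm_of_nonneg (by positivity)]
  calc |sechPowCoeff h p| * ((2 * p + h) / s * heatKernel (2 * p + h) s)
      ≤ (2 ^ h * (1 + h) ^ p) * ((2 + h) * 2 ^ p / s * heatKernel (2 * p + h) s) := by gcongr
    _ = 2 ^ h * (2 + h) / s * (1 * (2 * (1 + h)) ^ p * heatKernel (2 * p + h) s) := by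
        rw [mul_pow]; ring
    _ ≤ 2 ^ h * (2 + h) / s * (p.factorial * (2 * (1 + h)) ^ p * heatKernel (2 * p + h) s) := by
        gcongr
    _ ≤ 2 ^ h * (2 + h) / s * (C * (1 / 2) ^ p) :=
        mul_le_mul_of_nonneg_left (hC p _ (by linarith [p.cast_nonneg (α := ℝ)])) (by positivity)
    _ = 2 ^ h * (2 + h) / s * C * (1 / 2) ^ p := (mul_assoc _ _ _).symm

lemma summable_abs_tanhCoeff_mul_sechPowCoeff_mul_heatKernel {h r : ℝ} (hh : 0 < h) (hr : 0 < r) :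
    Summable fun z : ℕ × ℕ =>
      |tanhCoeff z.1 * sechPowCoeff h z.2| * heatKernel (2 * z.2 + h + 2 * z.1) r := by
  obtain ⟨C, hC⟩ := exists_factorial_mul_pow_mul_heatKernel_le (D := 1 + h) (by positivity) hr
  have summable_bound := (summable_geometric_two.mul_of_nonneg summable_geometric_two
    (fun _ => by positivity) fun _ => by positivity).mul_left (2 * 2 ^ h * C)
  refine .of_nonneg_of_le (fun z => mul_nonneg (abs_nonneg _) (heatKernel_nonneg _ _))
    (fun ⟨j, p⟩ => ?_) summable_bound
  have heat_nonneg := heatKernel_nonneg (2 * p + h + 2 * j) r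
  have one_le_factorial : (1 : ℝ) ≤ (j + p).factorial := by exact_mod_cast (j + p).factorial_pos
  have coeff_le : |tanhCoeff j * sechPowCoeff h p| ≤ 2 * (2 ^ h * (1 + h) ^ (j + p)) := by
    rw [abs_mul]
    refine mul_le_mul (abs_tanhCoeff_le j) ((abs_sechPowCoeff_le hh p).trans ?_) (abs_nonneg _)
      zero_le_two
    gcongr
    exacts [by linarith, Nat.le_add_left p j]
  have level_ge : ((j + p : ℕ) : ℝ) ≤ 2 * p + h + 2 * j := by
    push_cast; linarith [p.cast_nonneg (α := ℝ), j.cast_nonneg (α := ℝ)]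
  calc |tanhCoeff j * sechPowCoeff h p| * heatKernel (2 * p + h + 2 * j) r
      ≤ 2 * (2 ^ h * (1 + h) ^ (j + p)) * heatKernel (2 * p + h + 2 * j) r := by gcongr
    _ = 2 * 2 ^ h * (1 * (1 + h) ^ (j + p) * heatKernel (2 * p + h + 2 * j) r) := by ring
    _ ≤ 2 * 2 ^ h * ((j + p).factorial * (1 + h) ^ (j + p) *
        heatKernel (2 * p + h + 2 * j) r) := by gcongr
    _ ≤ 2 * 2 ^ h * (C * (1 / 2) ^ (j + p)) :=
        mul_le_mul_of_nonneg_left (hC _ _ level_ge) (by positivity)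
    _ = 2 * 2 ^ h * C * ((1 / 2) ^ j * (1 / 2) ^ p) := by rw [pow_add]; ring

lemma conv_eq_integral_Ioo (f g : ℝ → ℝ) {r : ℝ} (hr : 0 ≤ r) :
    conv f g r = ∫ s in Ioo 0 r, f s * g (r - s) := by
  rw [conv, intervalIntegral.integral_of_le hr, integral_Ioc_eq_integral_Ioo]

lemma hasSum_conv {ι κ : Type*} [Countable ι] [Countable κ] {f g : ℝ → ℝ} {φ : ι → ℝ → ℝ}
    {ψ : κ → ℝ → ℝ} {r : ℝ} (hr : 0 ≤ r)
    (hf : ∀ s ∈ Ioo 0 r, HasSum (fun i => φ i s) (f s))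
    (hg : ∀ s ∈ Ioo 0 r, HasSum (fun j => ψ j s) (g s))
    (integrable : ∀ i j, IntegrableOn (fun s => φ i s * ψ j (r - s)) (Ioo 0 r))
    (summable : Summable fun z : ι × κ => ∫ s in Ioo 0 r, ‖φ z.1 s * ψ z.2 (r - s)‖) :
    HasSum (fun z : ι × κ => conv (φ z.1) (ψ z.2) r) (conv f g r) := by
  have pointwise : ∀ s ∈ Ioo 0 r, ∑' z : ι × κ, φ z.1 s * ψ z.2 (r - s) = f s * g (r - s) := by
    intro s hs
    have hf_s := hf s hs
    have hg_s := hg (r - s) ⟨sub_pos.2 hs.2, sub_lt_self r hs.1⟩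
    rw [← hf_s.tsum_eq, ← hg_s.tsum_eq]
    exact (tsum_mul_tsum_of_summable_norm hf_s.summable.norm hg_s.summable.norm).symm
  simp only [conv_eq_integral_Ioo _ _ hr]
  rw [← setIntegral_congr_fun measurableSet_Ioo pointwise]
  exact hasSum_integral_of_summable_integral_norm (fun z => integrable z.1 z.2) summable

lemma tsum_eq_tsum_sum_of_mem_iff {ι κ E : Type*} [NormedAddCommGroup E] [CompleteSpace E]
    {f : ι → E} (hf : Summable f) (d : ι → κ) {S : κ → Finset ι} (hS : ∀ m i, i ∈ S m ↔ d i = m) :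
    ∑' i, f i = ∑' m, ∑ i ∈ S m, f i := by
  rw [← (hf.hasSum.tsum_fiberwise d).tsum_eq]
  refine tsum_congr fun m => ?_
  have fiber : d ⁻¹' {m} = (S m : Set ι) := by ext i; simp [hS]
  rw [fiber]
  exact Finset.tsum_subtype (S m) f

lemma sum_range_poch_div_factorial {h : ℝ} (hh : h ≠ 0) (q : ℕ) :
    ∑ p ∈ Finset.range q, poch h p / p.factorial = q / h * (poch h q / q.factorial) := by
  induction q with
  | zero => simp
  | succ n ih =>
    rw [Finset.sum_range_succ, ih, Nat.factorial_succ, poch_succ]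
    push_cast
    field_simp
    ring

/-- The coefficients of `tanh · sech ^ h`, which is `-1 / h` times the derivative of `sech ^ h`. -/
lemma sum_antidiagonal_tanhCoeff_mul_sechPowCoeff {h : ℝ} (hh : h ≠ 0) (q : ℕ) :
    ∑ z ∈ Finset.HasAntidiagonal.antidiagonal q, tanhCoeff z.1 * sechPowCoeff h z.2 =
      (2 * q + h) / h * sechPowCoeff h q := by
  have off_diagonal : ∀ p ∈ Finset.range q, tanhCoeff (q - p) * sechPowCoeff h p =
      2 * 2 ^ h * (-1) ^ q * (poch h p / p.factorial) := by
    intro p hp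
    have hpq := Finset.mem_range.1 hp
    rw [tanhCoeff, if_neg (Nat.sub_ne_zero_of_lt hpq), sechPowCoeff,
      ← pow_sub_mul_pow (-1 : ℝ) hpq.le]
    ring
  rw [← Finset.Nat.sum_antidiagonal_swap]
  simp only [Prod.fst_swap, Prod.snd_swap]
  rw [Finset.Nat.sum_antidiagonal_eq_sum_range_succ_mk, Finset.sum_range_succ,
    Finset.sum_congr rfl off_diagonal, ← Finset.mul_sum, sum_range_poch_div_factorial hh,
    Nat.sub_self, tanhCoeff, if_pos rfl, sechPowCoeff]
  field_simp

lemma hasSum_conv_fT1_fC {h r : ℝ} (hh : 0 < h) (hr : 0 < r) :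
    HasSum (fun z : ℕ × ℕ =>
        tanhCoeff z.1 * sechPowCoeff h z.2 * heatKernel (2 * z.2 + h + 2 * z.1) r)
      (conv fT1 (fC h) r) := by
  have regroup (j p : ℕ) (s : ℝ) : tanhCoeff j * heatKernel (2 * j) s *
      (sechPowCoeff h p * hittingDensity (2 * p + h) (r - s)) = tanhCoeff j * sechPowCoeff h p *
        (heatKernel (2 * j) s * hittingDensity (2 * p + h) (r - s)) := by ring
  have kernel (j p : ℕ) := integrableOn_and_integral_heatKernel_mul_hittingDensity
    (a := 2 * p + h) (b := 2 * j) (by positivity) (by positivity) hr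
  have fC_hasSum (s : ℝ) (hs : s ∈ Ioo 0 r) :
      HasSum (fun p : ℕ => sechPowCoeff h p * hittingDensity (2 * p + h) s) (fC h s) := by
    rw [fC_eq_tsum hh]
    exact (summable_sechPowCoeff_mul_hittingDensity hh hs.1).hasSum
  have norm_integral (j p : ℕ) : ∫ s in Ioo 0 r, ‖tanhCoeff j * heatKernel (2 * j) s *
      (sechPowCoeff h p * hittingDensity (2 * p + h) (r - s))‖ =
        |tanhCoeff j * sechPowCoeff h p| * heatKernel (2 * p + h + 2 * j) r := by
    rw [← (kernel j p).2, ← integral_const_mul]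
    refine integral_congr_ae (.of_forall fun s => ?_)
    simp only [regroup]
    rw [norm_mul, norm_eq_abs, norm_of_nonneg]
    exact mul_nonneg (heatKernel_nonneg _ _) (hittingDensity_nonneg (by positivity) _)
  refine (hasSum_conv hr.le (fun s hs => hasSum_tanhCoeff_mul_heatKernel hs.1) fC_hasSum
    (fun j p => ?_) ?_).congr_fun fun z => ?_
  · simp only [regroup]
    exact (kernel j p).1.const_mul _
  · simpa only [norm_integral] using summable_abs_tanhCoeff_mul_sechPowCoeff_mul_heatKernel hh hr
  · rw [conv_eq_integral_Ioo _ _ hr.le, ← (kernel z.1 z.2).2, ← integral_const_mul]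
    simp only [regroup]

lemma conv_fT1_fC_eq_tsum {h r : ℝ} (hh : 0 < h) (hr : 0 < r) :
    conv fT1 (fC h) r =
      ∑' q : ℕ, (2 * q + h) / h * sechPowCoeff h q * heatKernel (2 * q + h) r := by
  have hasSum := hasSum_conv_fT1_fC hh hr
  rw [← hasSum.tsum_eq, tsum_eq_tsum_sum_of_mem_iff hasSum.summable (fun z => z.1 + z.2)
    fun _ _ => Finset.HasAntidiagonal.mem_antidiagonal]
  refine tsum_congr fun q => ?_
  rw [← sum_antidiagonal_tanhCoeff_mul_sechPowCoeff hh.ne', Finset.sum_mul]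
  refine Finset.sum_congr rfl fun z hz => ?_
  rw [← Finset.HasAntidiagonal.mem_antidiagonal.1 hz]
  push_cast
  congr 2
  ring

end LevyDensities

section JacobiEquation

open Polynomial

/-- The Jacobi (hypergeometric) differential operator
`u (1 - u) d²/du² + (α + 1 - (α + β + 2) u) d/du` on polynomials in the variable `u = (1 - x) / 2`,
in which `P_m^{α,β}` is an eigenvector. -/
noncomputable def jacobiOperator (α β : ℝ) : ℝ[X] →ₗ[ℝ] ℝ[X] :=
  LinearMap.mulLeft ℝ (X * (1 - X)) ∘ₗ derivative ∘ₗ derivative +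
    LinearMap.mulLeft ℝ (C (α + 1) - C (α + β + 2) * X) ∘ₗ derivative

lemma jacobiOperator_apply (α β : ℝ) (p : ℝ[X]) :
    jacobiOperator α β p = X * (1 - X) * derivative (derivative p) +
      (C (α + 1) - C (α + β + 2) * X) * derivative p :=
  rfl

lemma coeff_jacobiOperator (α β : ℝ) (p : ℝ[X]) (k : ℕ) :
    (jacobiOperator α β p).coeff k =
      (k + 1) * (k + 1 + α) * p.coeff (k + 1) - k * (k + α + β + 1) * p.coeff k := by
  have expanded : jacobiOperator α β p =
      X * derivative (derivative p) - X * (X * derivative (derivative p)) +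
        C (α + 1) * derivative p - C (α + β + 2) * (X * derivative p) := by
    rw [jacobiOperator_apply]; ring
  rw [expanded]
  rcases k with _ | _ | k <;>
  simp only [coeff_add, coeff_sub, coeff_C_mul, coeff_X_mul, coeff_X_mul_zero, coeff_derivative] <;>
  push_cast <;> ring

/-- The coefficients of `₂F₁(-m, m + α + β + 1; α + 1; u)`. -/
noncomputable def jacobiCoeff (α β : ℝ) (m k : ℕ) : ℝ :=
  poch (-m) k * poch (m + α + β + 1) k / (poch (α + 1) k * k.factorial)

variable {α β : ℝ} {m : ℕ} {p : ℝ[X]}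

lemma coeff_eq_of_jacobiOperator_eq_smul (hα : -1 < α)
    (hp : jacobiOperator α β p = -(m * (m + α + β + 1) : ℝ) • p) (k : ℕ) :
    p.coeff k = p.coeff 0 * jacobiCoeff α β m k := by
  induction k with
  | zero => simp only [jacobiCoeff, poch_zero, Nat.factorial_zero, Nat.cast_one, mul_one, div_one]
  | succ k ih =>
    have recurrence := congrArg (coeff · k) hp
    rw [coeff_jacobiOperator, coeff_smul, smul_eq_mul, ih] at recurrence
    have hk : α + 1 + k ≠ 0 := by linarith [k.cast_nonneg (α := ℝ)]
    have := poch_pos (c := α + 1) (by linarith) k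
    refine mul_left_cancel₀ (mul_ne_zero k.cast_add_one_ne_zero hk) ?_
    trans (k * (k + α + β + 1) - m * (m + α + β + 1)) * (p.coeff 0 * jacobiCoeff α β m k)
    · linear_combination recurrence
    · rw [jacobiCoeff, jacobiCoeff, poch_succ, poch_succ, poch_succ, Nat.factorial_succ]
      push_cast
      field_simp
      ring

lemma poch_neg_natCast_eq_zero {m k : ℕ} (h : m < k) : poch (-m) k = 0 :=
  ascPochhammer_eval_neg_coe_nat_of_lt h

lemma eval_mul_poch_of_jacobiOperator_eq_smul (hα : -1 < α)
    (hp : jacobiOperator α β p = -(m * (m + α + β + 1) : ℝ) • p) (x : ℝ) :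
    p.eval ((1 - x) / 2) * (poch (α + 1) m / m.factorial) = p.eval 0 * jacobiP α β m x := by
  have coeff_eq := coeff_eq_of_jacobiOperator_eq_smul hα hp
  have degree_lt : p.natDegree < m + 1 := by
    rw [Nat.lt_succ_iff, natDegree_le_iff_coeff_eq_zero]
    intro k hk
    rw [coeff_eq, jacobiCoeff, poch_neg_natCast_eq_zero hk, zero_mul, zero_div, mul_zero]
  rw [eval_eq_sum_range' degree_lt, ← coeff_zero_eq_eval_zero, jacobiP, mul_left_comm, mul_comm]
  congr 1
  rw [Finset.mul_sum]
  refine Finset.sum_congr rfl fun k _ => ?_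
  rw [coeff_eq, jacobiCoeff]
  ring

lemma poch_neg_natCast_self (m : ℕ) : poch (-m) m = (-1) ^ m * m.factorial := by
  have h := ascPochhammer_eval_neg_eq_descPochhammer ℝ (m : ℝ) m
  rw [descPochhammer_eval_eq_descFactorial, Nat.descFactorial_self] at h
  exact h

end JacobiEquation

section ProductFormula

open Polynomial

lemma sum_eq_sum_of_injective_of_injective {ι κ M : Type*} [AddCommMonoid M] {s : Finset ι}
    {e e' : κ → ι} (he : e.Injective) (he' : e'.Injective) (hs : ∀ j, e j ∈ s ↔ e' j ∈ s)
    {f g : ι → M} (hf : ∀ i ∉ Set.range e, f i = 0) (hg : ∀ i ∉ Set.range e', g i = 0)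
    (hfg : ∀ j, f (e j) = g (e' j)) :
    ∑ i ∈ s, f i = ∑ i ∈ s, g i := by
  have preimage_eq : s.preimage e he.injOn = s.preimage e' he'.injOn := by
    ext j; rw [Finset.mem_preimage, Finset.mem_preimage, hs]
  rw [← Finset.sum_preimage e s he.injOn f fun i _ => hf i,
    ← Finset.sum_preimage e' s he'.injOn g fun i _ => hg i, preimage_eq]
  exact Finset.sum_congr rfl fun j _ => hfg j

/-- The degree attached to the index triple `((n, k), q)`: the product-formula terms whose triples
have degree `m` add up to a multiple of `P_m(x) P_m(y)`. -/
def tripleDegree (i : (ℕ × ℕ) × ℕ) : ℕ := 2 * i.1.1 + i.1.2 + 2 * i.2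

/-- The index triples `((n, k), q)` of degree `m`. -/
def triplesOfDegree (m : ℕ) : Finset ((ℕ × ℕ) × ℕ) :=
  ((Finset.range (m + 1) ×ˢ Finset.range (m + 1)) ×ˢ Finset.range (m + 1)).filter
    fun i => tripleDegree i = m

lemma mem_triplesOfDegree (m : ℕ) (i : (ℕ × ℕ) × ℕ) :
    i ∈ triplesOfDegree m ↔ tripleDegree i = m := by
  simp only [triplesOfDegree, Finset.mem_filter, Finset.mem_product, Finset.mem_range]
  rw [tripleDegree]
  omega

/-- The coefficient of `(x y) ^ k ((1 - x²) (1 - y²)) ^ n` with index `((n, k), q)` in the product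
formula. -/
noncomputable def productCoeff (α : ℝ) (i : (ℕ × ℕ) × ℕ) : ℝ :=
  2 ^ i.1.2 * (-1) ^ i.2 * Real.Gamma (2 * i.1.1 + i.1.2 + i.2 + α + 1 / 2) /
    (i.1.2.factorial * i.1.1.factorial * i.2.factorial * Real.Gamma (α + i.1.1 + 1))

variable {α : ℝ}

lemma productCoeff_succ_fst (hα : -1 < α) (n k q : ℕ) :
    productCoeff α ((n + 1, k), q) * (4 * (n + 1) * (n + 1 + α)) =
      productCoeff α ((n, k + 2), q) * ((k + 2) * (k + 1)) := by
  have hn : 0 < α + n + 1 := by linarith [n.cast_nonneg (α := ℝ)]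
  have := Real.Gamma_pos_of_pos hn
  have Gamma_succ : Real.Gamma (α + (n + 1 : ℕ) + 1) = (α + n + 1) * Real.Gamma (α + n + 1) := by
    rw [← Real.Gamma_add_one hn.ne']; congr 1; push_cast; ring
  have argument : (2 * (n + 1 : ℕ) + k + q + α + 1 / 2 : ℝ) =
      2 * n + (k + 2 : ℕ) + q + α + 1 / 2 := by push_cast; ring
  simp only [productCoeff]
  rw [argument, Gamma_succ, Nat.factorial_succ n, Nat.factorial_succ (k + 1), Nat.factorial_succ k]
  push_cast
  field_simp
  ring

lemma productCoeff_succ_snd (hα : -1 < α) (n k q : ℕ) :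
    productCoeff α ((n, k), q + 1) * (-4 * (q + 1) * (2 * n + k + (q + 1) + α + 1 / 2)) =
      productCoeff α ((n, k + 2), q) * ((k + 2) * (k + 1)) := by
  have Gamma_ne_zero : Real.Gamma (α + n + 1) ≠ 0 :=
    (Real.Gamma_pos_of_pos (by linarith [n.cast_nonneg (α := ℝ)])).ne'
  have Gamma_succ : Real.Gamma (2 * n + (k + 2 : ℕ) + q + α + 1 / 2) =
      (2 * n + k + (q + 1) + α + 1 / 2) * Real.Gamma (2 * n + k + (q + 1) + α + 1 / 2) := by
    rw [← Real.Gamma_add_one (by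
      linarith [n.cast_nonneg (α := ℝ), k.cast_nonneg (α := ℝ), q.cast_nonneg (α := ℝ)])]
    congr 1; push_cast; ring
  simp only [productCoeff]
  rw [Gamma_succ, Nat.factorial_succ q, Nat.factorial_succ (k + 1), Nat.factorial_succ k]
  push_cast
  field_simp
  ring

lemma notMem_range_succ_fst {i : (ℕ × ℕ) × ℕ}
    (hi : i ∉ Set.range fun j : (ℕ × ℕ) × ℕ => ((j.1.1 + 1, j.1.2), j.2)) : i.1.1 = 0 := by
  obtain ⟨⟨_ | n, k⟩, q⟩ := i
  exacts [rfl, (hi ⟨((n, k), q), rfl⟩).elim]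

lemma notMem_range_succ_snd {i : (ℕ × ℕ) × ℕ}
    (hi : i ∉ Set.range fun j : (ℕ × ℕ) × ℕ => (j.1, j.2 + 1)) : i.2 = 0 := by
  obtain ⟨nk, _ | q⟩ := i
  exacts [rfl, (hi ⟨(nk, q), rfl⟩).elim]

lemma notMem_range_add_two {i : (ℕ × ℕ) × ℕ}
    (hi : i ∉ Set.range fun j : (ℕ × ℕ) × ℕ => ((j.1.1, j.1.2 + 2), j.2)) :
    i.1.2 = 0 ∨ i.1.2 = 1 := by
  obtain ⟨⟨n, _ | _ | k⟩, q⟩ := i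
  exacts [.inl rfl, .inr rfl, (hi ⟨((n, k), q), rfl⟩).elim]

lemma sum_productCoeff_shift_fst (hα : -1 < α) (a b : ℝ) (m : ℕ) :
    ∑ i ∈ triplesOfDegree m,
        productCoeff α i * (4 * i.1.1 * (i.1.1 + α)) * (a ^ i.1.2 * b ^ (i.1.1 - 1)) =
      ∑ i ∈ triplesOfDegree m,
        productCoeff α i * (i.1.2 * (i.1.2 - 1)) * (a ^ (i.1.2 - 2) * b ^ i.1.1) := by
  refine sum_eq_sum_of_injective_of_injective
    (e := fun j : (ℕ × ℕ) × ℕ => ((j.1.1 + 1, j.1.2), j.2))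
    (e' := fun j => ((j.1.1, j.1.2 + 2), j.2))
    (fun i j hij => ?_) (fun i j hij => ?_) (fun j => ?_) (fun i hi => ?_) (fun i hi => ?_)
    fun ⟨⟨n, k⟩, q⟩ => ?_
  · simpa [Prod.ext_iff] using hij
  · simpa [Prod.ext_iff] using hij
  · rw [mem_triplesOfDegree, mem_triplesOfDegree, tripleDegree, tripleDegree]; dsimp only; omega
  · simp [notMem_range_succ_fst hi]
  · rcases notMem_range_add_two hi with h | h <;> simp [h]
  · have shift := productCoeff_succ_fst hα n k q
    simp only [Nat.add_sub_cancel]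
    push_cast
    rw [shift]
    ring

lemma sum_productCoeff_shift_snd (hα : -1 < α) (a b : ℝ) (m : ℕ) :
    ∑ i ∈ triplesOfDegree m, productCoeff α i *
        (-4 * i.2 * (2 * i.1.1 + i.1.2 + i.2 + α + 1 / 2)) * (a ^ i.1.2 * b ^ i.1.1) =
      ∑ i ∈ triplesOfDegree m,
        productCoeff α i * (i.1.2 * (i.1.2 - 1)) * (a ^ (i.1.2 - 2) * b ^ i.1.1) := by
  refine sum_eq_sum_of_injective_of_injective
    (e := fun j : (ℕ × ℕ) × ℕ => (j.1, j.2 + 1)) (e' := fun j => ((j.1.1, j.1.2 + 2), j.2))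
    (fun i j hij => ?_) (fun i j hij => ?_) (fun j => ?_) (fun i hi => ?_) (fun i hi => ?_)
    fun ⟨⟨n, k⟩, q⟩ => ?_
  · simpa [Prod.ext_iff] using hij
  · simpa [Prod.ext_iff] using hij
  · rw [mem_triplesOfDegree, mem_triplesOfDegree, tripleDegree, tripleDegree]; dsimp only; omega
  · simp [notMem_range_succ_snd hi]
  · rcases notMem_range_add_two hi with h | h <;> simp [h]
  · have shift := productCoeff_succ_snd hα n k q
    simp only [Nat.add_sub_cancel]
    push_cast
    rw [shift]
    ring

/-- `(x y) ^ k ((1 - x²) (1 - y²)) ^ n` as a polynomial in `u = (1 - x) / 2`. -/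
noncomputable def productMonomial (y : ℝ) (k n : ℕ) : ℝ[X] :=
  (C y * (1 - C 2 * X)) ^ k * (C (1 - y ^ 2) * (C 4 * (X * (1 - X)))) ^ n

lemma eval_jacobiOperator_productMonomial (α y u : ℝ) (k n : ℕ) :
    (jacobiOperator α α (productMonomial y k n)).eval u =
      k * (k - 1) * (y ^ 2 * (4 * (u * (1 - u)))) * ((y * (1 - 2 * u)) ^ (k - 2) *
          ((1 - y ^ 2) * (4 * (u * (1 - u)))) ^ n)
      + 4 * n * (n + α) * (1 - y ^ 2) * ((y * (1 - 2 * u)) ^ k *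
          ((1 - y ^ 2) * (4 * (u * (1 - u)))) ^ (n - 1))
      - (2 * n * (2 * k + 1) + 4 * n * (n + α) + (2 * α + 2) * k) *
        ((y * (1 - 2 * u)) ^ k * ((1 - y ^ 2) * (4 * (u * (1 - u)))) ^ n) := by
  rw [jacobiOperator_apply, productMonomial]
  rcases k with _ | _ | k <;> rcases n with _ | _ | n <;>
  simp only [derivative_mul, derivative_pow, derivative_sub, derivative_C, derivative_X,
    derivative_one, derivative_zero, derivative_natCast, map_add, map_natCast, eval_add, eval_sub,
    eval_mul, eval_pow, eval_C, eval_X, eval_one, eval_zero, eval_natCast, Nat.add_sub_cancel,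
    Nat.zero_sub, Nat.sub_self, Nat.reduceSubDiff, Nat.reduceAdd, pow_zero] <;>
  push_cast <;> ring

/-- The right-hand side of the product formula for `P_m^{α,α}(x) P_m^{α,α}(y)`, up to a constant,
as a polynomial in `u = (1 - x) / 2`. -/
noncomputable def productPoly (α y : ℝ) (m : ℕ) : ℝ[X] :=
  ∑ i ∈ triplesOfDegree m, productCoeff α i • productMonomial y i.1.2 i.1.1

lemma sum_productCoeff_eq_zero (hα : -1 < α) {a A B Y : ℝ} (h : Y * A + B = 1 - a ^ 2) (m : ℕ) :
    ∑ i ∈ triplesOfDegree m, productCoeff α i * (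
        i.1.2 * (i.1.2 - 1) * (Y * A) * (a ^ (i.1.2 - 2) * (B * A) ^ i.1.1)
        + 4 * i.1.1 * (i.1.1 + α) * B * (a ^ i.1.2 * (B * A) ^ (i.1.1 - 1))
        - (2 * i.1.1 * (2 * i.1.2 + 1) + 4 * i.1.1 * (i.1.1 + α) + (2 * α + 2) * i.1.2) *
          (a ^ i.1.2 * (B * A) ^ i.1.1)
        + m * (m + 2 * α + 1) * (a ^ i.1.2 * (B * A) ^ i.1.1)) = 0 := by
  have shift_fst := sum_productCoeff_shift_fst hα a (B * A) m
  have shift_snd := sum_productCoeff_shift_snd hα a (B * A) m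
  rw [← sub_eq_zero, ← Finset.sum_sub_distrib] at shift_fst shift_snd
  have shifts := congrArg₂ (fun S T => B * S - T) shift_fst shift_snd
  simp only [mul_zero, sub_zero, Finset.mul_sum, ← Finset.sum_sub_distrib] at shifts
  refine Eq.trans ?_ shifts
  refine Finset.sum_congr rfl fun i hi => ?_
  have degree : (m : ℝ) = 2 * i.1.1 + i.1.2 + 2 * i.2 := by
    rw [← (mem_triplesOfDegree m i).1 hi, tripleDegree]; push_cast; ring
  have lower : (i.1.2 * (i.1.2 - 1) : ℝ) * (a ^ (i.1.2 - 2) * a ^ 2) =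
      i.1.2 * (i.1.2 - 1) * a ^ i.1.2 := by
    obtain ⟨⟨n, _ | _ | k⟩, q⟩ := i <;> simp [pow_succ, mul_assoc]
  rw [degree]
  linear_combination productCoeff α i * (B * A) ^ i.1.1 *
    (i.1.2 * (i.1.2 - 1) * a ^ (i.1.2 - 2) * h - lower)

lemma jacobiOperator_productPoly (hα : -1 < α) (y : ℝ) (m : ℕ) :
    jacobiOperator α α (productPoly α y m) =
      -(m * (m + α + α + 1) : ℝ) • productPoly α y m := by
  refine Polynomial.funext fun u => eq_of_sub_eq_zero ?_
  rw [productPoly, map_sum, Finset.smul_sum, eval_finsetSum, eval_finsetSum,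
    ← Finset.sum_sub_distrib, ← sum_productCoeff_eq_zero hα (a := y * (1 - 2 * u))
      (A := 4 * (u * (1 - u))) (B := 1 - y ^ 2) (Y := y ^ 2) (by ring) m]
  refine Finset.sum_congr rfl fun i _ => ?_
  rw [map_smul, eval_smul, eval_smul, eval_smul, eval_jacobiOperator_productMonomial,
    productMonomial]
  simp only [smul_eq_mul, eval_mul, eval_pow, eval_sub, eval_C, eval_X, eval_one]
  ring

/-- The product-formula term with index `((n, k), q)`. -/
noncomputable def productTerm (α x y : ℝ) (i : (ℕ × ℕ) × ℕ) : ℝ :=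
  productCoeff α i * ((x * y) ^ i.1.2 * ((1 - x ^ 2) * (1 - y ^ 2)) ^ i.1.1)

lemma productTerm_comm (α x y : ℝ) (i : (ℕ × ℕ) × ℕ) :
    productTerm α x y i = productTerm α y x i := by
  rw [productTerm, productTerm, mul_comm x y, mul_comm (1 - x ^ 2)]

lemma eval_productPoly (α x y : ℝ) (m : ℕ) :
    (productPoly α y m).eval ((1 - x) / 2) = ∑ i ∈ triplesOfDegree m, productTerm α x y i := by
  rw [productPoly, eval_finsetSum]
  refine Finset.sum_congr rfl fun i _ => ?_
  simp only [productMonomial, productTerm, eval_smul, smul_eq_mul, eval_mul, eval_pow, eval_sub,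
    eval_C, eval_X, eval_one]
  ring

lemma sum_productTerm_mul_sq (hα : -1 < α) (x y : ℝ) (m : ℕ) :
    (∑ i ∈ triplesOfDegree m, productTerm α x y i) * (poch (α + 1) m / m.factorial) ^ 2 =
      (∑ i ∈ triplesOfDegree m, productTerm α 1 1 i) * (jacobiP α α m x * jacobiP α α m y) := by
  have eval_zero (z : ℝ) : (productPoly α z m).eval 0 =
      ∑ i ∈ triplesOfDegree m, productTerm α z 1 i := by
    rw [show (0 : ℝ) = (1 - 1) / 2 by norm_num, eval_productPoly]
    exact Finset.sum_congr rfl fun i _ => productTerm_comm α 1 z i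
  have in_x := eval_mul_poch_of_jacobiOperator_eq_smul hα (jacobiOperator_productPoly hα y m) x
  have in_y := eval_mul_poch_of_jacobiOperator_eq_smul hα (jacobiOperator_productPoly hα 1 m) y
  rw [eval_productPoly, eval_zero] at in_x in_y
  linear_combination poch (α + 1) m / m.factorial * in_x + jacobiP α α m x * in_y

lemma natDegree_one_sub_two_mul_X : (1 - C 2 * X : ℝ[X]).natDegree = 1 := by
  compute_degree!

lemma coeff_productPoly_one (α : ℝ) (m : ℕ) :
    (productPoly α 1 m).coeff m = productCoeff α ((0, m), 0) * (-2) ^ m := by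
  have monomial_eq (k : ℕ) : productMonomial 1 k 0 = (1 - C 2 * X) ^ k := by
    rw [productMonomial, pow_zero, mul_one, C_1, one_mul]
  have monomial_succ (k n : ℕ) : productMonomial 1 k (n + 1) = 0 := by
    simp [productMonomial]
  have leading : ((1 - C 2 * X : ℝ[X]) ^ m).coeff m = (-2) ^ m := by
    have h := coeff_pow_of_natDegree_le (m := m) natDegree_one_sub_two_mul_X.le
    rw [mul_one] at h
    simpa [coeff_one] using h
  rw [productPoly, finsetSum_coeff, Finset.sum_eq_single ((0, m), 0)]
  · rw [coeff_smul, smul_eq_mul, monomial_eq, leading]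
  · rintro ⟨⟨_ | n, k⟩, q⟩ hi hne
    · simp only [mem_triplesOfDegree, tripleDegree] at hi
      have hkm : k < m := by
        by_contra! hmk
        exact hne (by simp only [Prod.mk.injEq, true_and]; omega)
      rw [coeff_smul, monomial_eq, coeff_eq_zero_of_natDegree_lt, smul_zero]
      rwa [natDegree_pow, natDegree_one_sub_two_mul_X, mul_one]
    · rw [monomial_succ, smul_zero, coeff_zero]
  · exact fun h => (h ((mem_triplesOfDegree _ _).2 (by simp [tripleDegree]))).elim

lemma sum_productTerm_one_one (hα : -1 < α) (m : ℕ) :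
    (∑ i ∈ triplesOfDegree m, productTerm α 1 1 i) *
        (poch (m + α + α + 1) m * Real.Gamma (α + 1) * m.factorial) =
      4 ^ m * Real.Gamma (m + α + 1 / 2) * poch (α + 1) m := by
  have top := coeff_eq_of_jacobiOperator_eq_smul hα (jacobiOperator_productPoly hα 1 m) m
  rw [coeff_productPoly_one, coeff_zero_eq_eval_zero, show (0 : ℝ) = (1 - 1) / 2 by norm_num,
    eval_productPoly, jacobiCoeff, poch_neg_natCast_self, productCoeff] at top
  have := poch_pos (c := α + 1) (by linarith) m
  have := Real.Gamma_pos_of_pos (show 0 < α + 1 by linarith)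
  simp only [Nat.cast_zero, mul_zero, zero_add, add_zero, pow_zero, mul_one, Nat.factorial_zero,
    Nat.cast_one, neg_pow (2 : ℝ)] at top
  generalize Real.Gamma (m + α + 1 / 2) = G at top ⊢
  field_simp at top
  rw [show (4 : ℝ) = 2 * 2 by norm_num, mul_pow]
  linear_combination -top

lemma four_pow_mul_Gamma_mul_poch_mul_Gamma (hα : -1 < α) (m : ℕ) :
    4 ^ m * Real.Gamma (m + α + 1 / 2) * poch (α + 1) m * Real.Gamma (α + α + 2) =
      2 * Real.Gamma (α + 3 / 2) * Real.Gamma (m + α + α + 1 + m) := by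
  have duplication_m := Real.Gamma_mul_Gamma_add_half (m + α + 1 / 2)
  have duplication := Real.Gamma_mul_Gamma_add_half (α + 1)
  rw [show (m + α + 1 / 2 + 1 / 2 : ℝ) = α + 1 + m by ring, Gamma_add_natCast (by linarith),
    show 2 * (m + α + 1 / 2 : ℝ) = m + α + α + 1 + m by ring] at duplication_m
  rw [show α + 1 + 1 / 2 = α + 3 / 2 by ring, show 2 * (α + 1) = α + α + 2 by ring] at duplication
  have two_rpow : (2 : ℝ) ^ (1 - (m + α + α + 1 + m)) * 4 ^ m = 2 ^ (1 - (α + α + 2)) * 2 := by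
    rw [show (4 : ℝ) ^ m = 2 ^ (2 * m) by rw [pow_mul]; norm_num,
      ← Real.rpow_add_natCast two_ne_zero, ← Real.rpow_add_one two_ne_zero]
    congr 1; push_cast; ring
  refine mul_left_cancel₀ (Real.Gamma_pos_of_pos (show 0 < α + 1 by linarith)).ne' ?_
  linear_combination 4 ^ m * Real.Gamma (α + α + 2) * duplication_m -
    2 * Real.Gamma (m + α + α + 1 + m) * duplication +
    Real.Gamma (m + α + α + 1 + m) * Real.Gamma (α + α + 2) * √Real.pi * two_rpow

lemma Rn_mul_sum_productTerm_one_one (hα : -(1 / 2) < α) (m : ℕ) :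
    Rn α α m * (Real.Gamma (α + 1) / Real.Gamma (α + 3 / 2) * (m + α + 1 / 2)) *
        ∑ i ∈ triplesOfDegree m, productTerm α 1 1 i =
      (poch (α + 1) m / m.factorial) ^ 2 := by
  have := m.cast_nonneg (α := ℝ)
  have poch_pos_m := poch_pos (c := m + α + α + 1) (by linarith) m
  have hGamma := Real.Gamma_pos_of_pos (show 0 < α + 1 by linarith)
  have hGamma_half := Real.Gamma_pos_of_pos (show 0 < α + 3 / 2 by linarith)
  have hGamma_m := Real.Gamma_pos_of_pos (show 0 < m + α + α + 1 by linarith)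
  have hm_ne : 2 * (m : ℝ) + α + α + 1 ≠ 0 := by linarith
  have value := sum_productTerm_one_one (show -1 < α by linarith) m
  have duplication := four_pow_mul_Gamma_mul_poch_mul_Gamma (show -1 < α by linarith) m
  rw [← eq_div_iff (by positivity)] at value
  rw [Gamma_add_natCast (by linarith)] at duplication
  rw [value, Rn, show α + α + (m : ℝ) + 1 = m + α + α + 1 by ring,
    show (m + α + 1 / 2 : ℝ) = (2 * m + α + α + 1) / 2 by ring]
  rw [show (m + α + 1 / 2 : ℝ) = (2 * m + α + α + 1) / 2 by ring] at duplication
  generalize Real.Gamma ((2 * m + α + α + 1) / 2) = G at duplication ⊢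
  generalize Real.Gamma (α + α + 2) = G₂ at duplication ⊢
  generalize Real.Gamma (α + 3 / 2) = G₃ at hGamma_half duplication ⊢
  field_simp
  linear_combination poch (α + 1) m ^ 2 * duplication

lemma inv_Rn_mul_jacobiP_mul_jacobiP (hα : -(1 / 2) < α) (x y : ℝ) (m : ℕ) :
    (Rn α α m)⁻¹ * (jacobiP α α m x * jacobiP α α m y) =
      Real.Gamma (α + 1) / Real.Gamma (α + 3 / 2) * (m + α + 1 / 2) *
        ∑ i ∈ triplesOfDegree m, productTerm α x y i := by
  have product := sum_productTerm_mul_sq (show -1 < α by linarith) x y m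
  have normalization := Rn_mul_sum_productTerm_one_one hα m
  have rhs_ne_zero : (poch (α + 1) m / m.factorial) ^ 2 ≠ 0 := by
    have := poch_pos (c := α + 1) (by linarith) m
    positivity
  rw [← normalization] at product rhs_ne_zero
  rw [mul_ne_zero_iff, mul_ne_zero_iff] at rhs_ne_zero
  obtain ⟨⟨Rn_ne_zero, -⟩, sum_ne_zero⟩ := rhs_ne_zero
  rw [inv_mul_eq_iff_eq_mul₀ Rn_ne_zero]
  refine mul_left_cancel₀ sum_ne_zero ?_
  linear_combination -product

end ProductFormula

section Summation

variable {α : ℝ}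

/-- The common summand of both sides of the semigroup expansion at time `t = 1 / (2 r)`: summing it
over `q` gives the summand of the double series in `(n, k)`, and summing it over the triples of
degree `m` gives the spectral term of degree `m`. -/
noncomputable def semigroupTerm (α r x y : ℝ) (i : (ℕ × ℕ) × ℕ) : ℝ :=
  2 ^ (α + 1 / 2) * (tripleDegree i + α + 1 / 2) * heatKernel (tripleDegree i + α + 1 / 2) r *
    productTerm α x y i

lemma tsum_semigroupTerm {r : ℝ} (hα : -(1 / 2) < α) (hr : 0 < r) (x y : ℝ) (n k : ℕ) :
    ∑' q : ℕ, semigroupTerm α r x y ((n, k), q) =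
      Real.Gamma ((2 * n + k + α + 1 / 2) + 1) * (x * y) ^ k /
          (k.factorial * n.factorial * Real.Gamma (α + n + 1)) *
        ((1 - x ^ 2) * (1 - y ^ 2) / 4) ^ n * conv fT1 (fC (2 * n + k + α + 1 / 2)) r := by
  have hν : 0 < 2 * n + k + α + 1 / 2 := by
    linarith [n.cast_nonneg (α := ℝ), k.cast_nonneg (α := ℝ)]
  have two_rpow : (2 : ℝ) ^ (2 * n + k + α + 1 / 2) = 2 ^ (α + 1 / 2) * (4 ^ n * 2 ^ k) := by
    rw [show (2 * n + k + α + 1 / 2 : ℝ) = α + 1 / 2 + (2 * n + k : ℕ) by push_cast; ring,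
      Real.rpow_add_natCast two_ne_zero, pow_add, pow_mul, show (2 : ℝ) ^ 2 = 4 by norm_num]
  rw [conv_fT1_fC_eq_tsum hν hr, ← tsum_mul_left]
  refine tsum_congr fun q => ?_
  have level : (tripleDegree ((n, k), q) + α + 1 / 2 : ℝ) = 2 * q + (2 * n + k + α + 1 / 2) := by
    rw [tripleDegree]; push_cast; ring
  have argument : (2 * n + k + q + α + 1 / 2 : ℝ) = 2 * n + k + α + 1 / 2 + q := by ring
  rw [semigroupTerm, productTerm, productCoeff, level, argument, Gamma_add_natCast hν,
    Real.Gamma_add_one hν.ne', sechPowCoeff, two_rpow]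
  generalize 2 * n + k + α + 1 / 2 = ν at hν ⊢
  generalize heatKernel (2 * q + ν) r = heat
  generalize Real.Gamma (α + n + 1) = G
  rw [div_pow]
  field_simp

lemma inv_Gamma_add_natCast_add_one_le (hα : -(1 / 2) < α) (n : ℕ) :
    (Real.Gamma (α + n + 1))⁻¹ ≤ 2 ^ n / Real.Gamma (α + 1) := by
  have hGamma := Real.Gamma_pos_of_pos (show 0 < α + 1 by linarith)
  have half_pow_le : (1 / 2) ^ n ≤ poch (α + 1) n :=
    (pow_le_pow_left₀ (by norm_num) (by linarith) n).trans (pow_le_poch (by linarith) n)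
  rw [show α + n + 1 = α + 1 + n by ring, Gamma_add_natCast (by linarith), mul_inv, div_eq_mul_inv]
  gcongr
  rw [← inv_inv ((2 : ℝ) ^ n), ← inv_pow, inv_eq_one_div (2 : ℝ)]
  gcongr

lemma Gamma_add_half_le_of_le (hα : -(1 / 2) < α) {N m : ℕ} (hNm : N ≤ m) :
    Real.Gamma (α + 1 / 2 + N) ≤ Real.Gamma (α + 1 / 2) * ((α + 3 / 2) ^ m * m.factorial) := by
  have hGamma := Real.Gamma_pos_of_pos (show 0 < α + 1 / 2 by linarith)
  have one_le : 1 ≤ α + 3 / 2 := by linarith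
  refine (Gamma_add_natCast_le (by linarith) N).trans ?_
  rw [show 1 + (α + 1 / 2) = α + 3 / 2 by ring]
  gcongr

lemma abs_productCoeff_le (hα : -(1 / 2) < α) (i : (ℕ × ℕ) × ℕ) :
    |productCoeff α i| ≤ Real.Gamma (α + 1 / 2) / Real.Gamma (α + 1) *
      ((tripleDegree i).factorial * (4 * (α + 3 / 2)) ^ tripleDegree i) := by
  obtain ⟨⟨n, k⟩, q⟩ := i
  set m := tripleDegree ((n, k), q) with hm
  simp only [tripleDegree] at hm
  have hα_pos : 0 < α + 3 / 2 := by linarith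
  have hGamma := Real.Gamma_pos_of_pos (show 0 < α + 1 by linarith)
  have hGamma_half := Real.Gamma_pos_of_pos (show 0 < α + 1 / 2 by linarith)
  have hGamma_n := Real.Gamma_pos_of_pos (show 0 < α + n + 1 by linarith [n.cast_nonneg (α := ℝ)])
  have argument : (2 * n + k + q + α + 1 / 2 : ℝ) = α + 1 / 2 + (2 * n + k + q : ℕ) := by
    push_cast; ring
  have numerator_pos : 0 < Real.Gamma (α + 1 / 2 + (2 * n + k + q : ℕ)) :=
    Real.Gamma_pos_of_pos (add_pos_of_pos_of_nonneg (by linarith) (Nat.cast_nonneg _))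
  have one_le_factorials : (1 : ℝ) ≤ k.factorial * n.factorial * q.factorial := by
    exact_mod_cast Nat.one_le_iff_ne_zero.2 (by positivity)
  have numerator_le := Gamma_add_half_le_of_le hα (show 2 * n + k + q ≤ m by omega)
  have inv_le : (Real.Gamma (α + n + 1))⁻¹ ≤ 2 ^ m / Real.Gamma (α + 1) := by
    refine (inv_Gamma_add_natCast_add_one_le hα n).trans ?_
    gcongr
    exacts [one_le_two, by omega]
  have two_pow_le : (2 : ℝ) ^ k ≤ 2 ^ m := pow_le_pow_right₀ one_le_two (by omega)
  calc |productCoeff α ((n, k), q)|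
      = 2 ^ k * Real.Gamma (α + 1 / 2 + (2 * n + k + q : ℕ)) * (Real.Gamma (α + n + 1))⁻¹ /
          (k.factorial * n.factorial * q.factorial) := by
        rw [productCoeff, argument, abs_div, abs_mul, abs_mul, abs_pow, abs_pow, abs_neg, abs_one,
          one_pow, abs_two, mul_one, abs_of_pos numerator_pos, abs_of_pos (by positivity)]
        field_simp
    _ ≤ 2 ^ k * Real.Gamma (α + 1 / 2 + (2 * n + k + q : ℕ)) * (Real.Gamma (α + n + 1))⁻¹ :=
        div_le_self (by positivity) one_le_factorials
    _ ≤ 2 ^ m * (Real.Gamma (α + 1 / 2) * ((α + 3 / 2) ^ m * m.factorial)) *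
          (2 ^ m / Real.Gamma (α + 1)) := by
        gcongr
    _ = _ := by rw [show (4 : ℝ) = 2 * 2 by norm_num, mul_pow, mul_pow]; ring

lemma abs_productTerm_le (hα : -(1 / 2) < α) (x y : ℝ) (i : (ℕ × ℕ) × ℕ) :
    |productTerm α x y i| ≤ Real.Gamma (α + 1 / 2) / Real.Gamma (α + 1) *
      ((tripleDegree i).factorial *
        (4 * (α + 3 / 2) * (1 + |x * y| + |(1 - x ^ 2) * (1 - y ^ 2)|)) ^ tripleDegree i) := by
  set E := 1 + |x * y| + |(1 - x ^ 2) * (1 - y ^ 2)| with hE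
  have xy_le : |x * y| ≤ E := by linarith [abs_nonneg ((1 - x ^ 2) * (1 - y ^ 2))]
  have weight_le : |(1 - x ^ 2) * (1 - y ^ 2)| ≤ E := by linarith [abs_nonneg (x * y)]
  have one_le : 1 ≤ E := by rw [hE, add_assoc]; exact le_add_of_nonneg_right (by positivity)
  have monomial_le : |(x * y) ^ i.1.2 * ((1 - x ^ 2) * (1 - y ^ 2)) ^ i.1.1| ≤
      E ^ tripleDegree i := by
    calc |(x * y) ^ i.1.2 * ((1 - x ^ 2) * (1 - y ^ 2)) ^ i.1.1|
        ≤ E ^ i.1.2 * E ^ i.1.1 := by rw [abs_mul, abs_pow, abs_pow]; gcongr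
      _ = E ^ (i.1.2 + i.1.1) := (pow_add _ _ _).symm
      _ ≤ E ^ tripleDegree i := pow_le_pow_right₀ one_le (by rw [tripleDegree]; omega)
  calc |productTerm α x y i|
      ≤ Real.Gamma (α + 1 / 2) / Real.Gamma (α + 1) *
            ((tripleDegree i).factorial * (4 * (α + 3 / 2)) ^ tripleDegree i) *
          E ^ tripleDegree i := by
        rw [productTerm, abs_mul]
        exact mul_le_mul (abs_productCoeff_le hα i) monomial_le (abs_nonneg _)
          ((abs_nonneg _).trans (abs_productCoeff_le hα i))
    _ = _ := by rw [mul_pow _ E]; ring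

lemma summable_one_half_pow_tripleDegree :
    Summable fun i : (ℕ × ℕ) × ℕ => (1 / 2 : ℝ) ^ tripleDegree i := by
  have summable_half := summable_geometric_two
  have summable_quarter : Summable fun n : ℕ => ((1 / 2 : ℝ) ^ 2) ^ n :=
    summable_geometric_of_lt_one (by norm_num) (by norm_num)
  refine ((summable_quarter.mul_of_nonneg summable_half (fun _ => by positivity)
    fun _ => by positivity).mul_of_nonneg summable_quarter (fun _ => by positivity)
    fun _ => by positivity).congr fun i => ?_
  rw [tripleDegree, pow_add, pow_add, pow_mul, pow_mul]

lemma summable_semigroupTerm {r : ℝ} (hα : -(1 / 2) < α) (hr : 0 < r) (x y : ℝ) :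
    Summable (semigroupTerm α r x y) := by
  set D := 4 * (α + 3 / 2) * (1 + |x * y| + |(1 - x ^ 2) * (1 - y ^ 2)|)
  set G := Real.Gamma (α + 1 / 2) / Real.Gamma (α + 1)
  have hα_pos : 0 < α + 3 / 2 := by linarith
  have D_pos : 0 < 2 * D := by positivity
  have G_pos : 0 < G :=
    div_pos (Real.Gamma_pos_of_pos (by linarith)) (Real.Gamma_pos_of_pos (by linarith))
  obtain ⟨C, hC⟩ := exists_factorial_mul_pow_mul_heatKernel_le D_pos hr
  refine .of_norm_bounded (summable_one_half_pow_tripleDegree.mul_left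
    (2 ^ (α + 1 / 2) * (α + 3 / 2) * G * C)) fun i => ?_
  have term_le : |productTerm α x y i| ≤ G * ((tripleDegree i).factorial * D ^ tripleDegree i) :=
    abs_productTerm_le hα x y i
  rw [semigroupTerm]
  generalize tripleDegree i = m at term_le ⊢
  have level_nonneg : 0 ≤ m + α + 1 / 2 := by linarith [m.cast_nonneg (α := ℝ)]
  have level_le : m + α + 1 / 2 ≤ (α + 3 / 2) * 2 ^ m := by
    linarith [natCast_add_le_mul_two_pow (show 0 ≤ α + 1 / 2 by linarith) m]
  have heat_nonneg := heatKernel_nonneg (m + α + 1 / 2) r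
  calc ‖2 ^ (α + 1 / 2) * (m + α + 1 / 2) * heatKernel (m + α + 1 / 2) r * productTerm α x y i‖
      = 2 ^ (α + 1 / 2) * (m + α + 1 / 2) * heatKernel (m + α + 1 / 2) r *
          |productTerm α x y i| := by
        rw [Real.norm_eq_abs, abs_mul, abs_of_nonneg (by positivity)]
    _ ≤ 2 ^ (α + 1 / 2) * ((α + 3 / 2) * 2 ^ m) * heatKernel (m + α + 1 / 2) r *
          (G * (m.factorial * D ^ m)) := by
        gcongr
    _ = 2 ^ (α + 1 / 2) * (α + 3 / 2) * G *
          (m.factorial * (2 * D) ^ m * heatKernel (m + α + 1 / 2) r) := by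
        rw [mul_pow 2 D]; ring
    _ ≤ 2 ^ (α + 1 / 2) * (α + 3 / 2) * G * (C * (1 / 2) ^ m) :=
        mul_le_mul_of_nonneg_left (hC m (m + α + 1 / 2) (by linarith)) (by positivity)
    _ = _ := by ring

lemma heatKernel_one_div_two_mul (b : ℝ) {t : ℝ} (ht : 0 < t) :
    heatKernel b (1 / (2 * t)) = Real.exp (-b ^ 2 * t) * √t / √Real.pi := by
  rw [heatKernel, show 2 * Real.pi * (1 / (2 * t)) = Real.pi / t by field_simp,
    Real.sqrt_div Real.pi_pos.le, div_div_eq_mul_div]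
  congr 3
  field_simp

lemma spectralTerm_eq_sum_semigroupTerm {t : ℝ} (hα : -(1 / 2) < α) (ht : 0 < t) (x y : ℝ)
    (m : ℕ) :
    (Rn α α m)⁻¹ * Real.exp (-(m * (m + 2 * α + 1)) * t) * jacobiP α α m x * jacobiP α α m y =
      √Real.pi * (Real.Gamma (α + 1) / (2 ^ (α + 1 / 2) * Real.Gamma (α + 3 / 2))) *
          (Real.exp ((α + 1 / 2) ^ 2 * t) / √t) *
        ∑ i ∈ triplesOfDegree m, semigroupTerm α (1 / (2 * t)) x y i := by
  have sum_eq : ∑ i ∈ triplesOfDegree m, semigroupTerm α (1 / (2 * t)) x y i =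
      2 ^ (α + 1 / 2) * (m + α + 1 / 2) *
        (Real.exp (-(m + α + 1 / 2) ^ 2 * t) * √t / √Real.pi) *
        ∑ i ∈ triplesOfDegree m, productTerm α x y i := by
    rw [Finset.mul_sum, ← heatKernel_one_div_two_mul _ ht]
    refine Finset.sum_congr rfl fun i hi => ?_
    rw [semigroupTerm, (mem_triplesOfDegree m i).1 hi]
  have exp_eq : Real.exp (-(m * (m + 2 * α + 1)) * t) =
      Real.exp ((α + 1 / 2) ^ 2 * t) * Real.exp (-(m + α + 1 / 2) ^ 2 * t) := by
    rw [← Real.exp_add]; congr 1; ring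
  have two_rpow_pos : (0 : ℝ) < 2 ^ (α + 1 / 2) := by positivity
  rw [mul_assoc _ (jacobiP α α m x), mul_right_comm, inv_Rn_mul_jacobiP_mul_jacobiP hα, sum_eq,
    exp_eq]
  generalize (2 : ℝ) ^ (α + 1 / 2) = c at two_rpow_pos ⊢
  generalize Real.exp ((α + 1 / 2) ^ 2 * t) = e₀
  generalize Real.exp (-(m + α + 1 / 2) ^ 2 * t) = e₁
  generalize Real.Gamma (α + 3 / 2) = G₃
  field_simp

end Summation

theorem ultraspherical_semigroup_density_general (α : ℝ) (hα : -(1 / 2 : ℝ) < α)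
    (γ Kα : ℝ) (hγ : γ = α + 1 / 2)
    (hK : Kα = Real.Gamma (α + 1) / (2 ^ (α + 1 / 2 : ℝ) * Real.Gamma (α + 3 / 2)))
    (t : ℝ) (ht : 0 < t) (x y : ℝ) :
    ∑' m : ℕ,
        (Rn α α m)⁻¹ * Real.exp (-((m : ℝ) * ((m : ℝ) + 2 * α + 1)) * t) *
          jacobiP α α m x * jacobiP α α m y =
      Real.sqrt Real.pi * Kα * (Real.exp (γ ^ 2 * t) / Real.sqrt t) *
        ∑' nk : ℕ × ℕ,
          Real.Gamma ((2 * (nk.1 : ℝ) + (nk.2 : ℝ) + α + 1 / 2) + 1) * (x * y) ^ nk.2 /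
              ((Nat.factorial nk.2 : ℝ) * (Nat.factorial nk.1 : ℝ) *
                Real.Gamma (α + (nk.1 : ℝ) + 1)) *
            ((1 - x ^ 2) * (1 - y ^ 2) / 4) ^ nk.1 *
            conv fT1 (fC (2 * (nk.1 : ℝ) + (nk.2 : ℝ) + α + 1 / 2)) (1 / (2 * t)) := by
  have hr : 0 < 1 / (2 * t) := by positivity
  have summable := summable_semigroupTerm hα hr x y
  rw [hγ, hK, tsum_congr (spectralTerm_eq_sum_semigroupTerm hα ht x y), tsum_mul_left,
    ← tsum_eq_tsum_sum_of_mem_iff summable tripleDegree mem_triplesOfDegree, summable.tsum_prod]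
  congr 1
  exact tsum_congr fun ⟨n, k⟩ => tsum_semigroupTerm hα hr x y n k

/-- Expansion of the ultraspherical Jacobi semigroup density (`β = α > -1/2`): with
`γ = α+1/2`, `λ_m = m(m+2α+1)`, `ν(n,k,α) = 2n+k+α+1/2` and
`K_α = Γ(α+1)/(2^{α+1/2}Γ(α+3/2))`, for every `t > 0` and `x, y ∈ (-1,1)`,
`∑_{m≥0} R_m⁻¹ e^{-λ_m t} P_m^{α,α}(x) P_m^{α,α}(y)
  = √π K_α (e^{γ²t}/√t) ∑_{n,k≥0} [Γ(ν(n,k,α)+1)(xy)^k/(k! n! Γ(α+n+1))]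
      [(1-x²)(1-y²)/4]ⁿ (f_{T₁} ⋆ f_{C_{ν(n,k,α)}})(1/(2t))`. -/
theorem ultraspherical_semigroup_density (α : ℝ) (hα : -(1 / 2 : ℝ) < α)
    (γ Kα : ℝ) (hγ : γ = α + 1 / 2)
    (hK : Kα = Real.Gamma (α + 1) / (2 ^ (α + 1 / 2 : ℝ) * Real.Gamma (α + 3 / 2)))
    (t : ℝ) (ht : 0 < t) (x y : ℝ) (hx : x ∈ Set.Ioo (-1 : ℝ) 1) (hy : y ∈ Set.Ioo (-1 : ℝ) 1) :
    ∑' m : ℕ,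
        (Rn α α m)⁻¹ * Real.exp (-((m : ℝ) * ((m : ℝ) + 2 * α + 1)) * t) *
          jacobiP α α m x * jacobiP α α m y =
      Real.sqrt Real.pi * Kα * (Real.exp (γ ^ 2 * t) / Real.sqrt t) *
        ∑' nk : ℕ × ℕ,
          Real.Gamma ((2 * (nk.1 : ℝ) + (nk.2 : ℝ) + α + 1 / 2) + 1) * (x * y) ^ nk.2 /
              ((Nat.factorial nk.2 : ℝ) * (Nat.factorial nk.1 : ℝ) * Real.Gamma (α + (nk.1 : ℝ) + 1)) *
            ((1 - x ^ 2) * (1 - y ^ 2) / 4) ^ nk.1 *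
            conv fT1 (fC (2 * (nk.1 : ℝ) + (nk.2 : ℝ) + α + 1 / 2)) (1 / (2 * t)) := by
  exact ultraspherical_semigroup_density_general α hα γ Kα hγ hK t ht x y
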